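/- Let n be a positive integer and suppose f is an integer-valued quadratic polynomial on ℤ^k whose image is contained in ℕ and whose set of represented values is exactly ℕ \ {n} ∪ {0,1,…,n−1} restricted below n, i.e., the smallest nonnegative integer not represented by f is n. Then the polynomial g = f ⊕ (n+1)(T_x + T_y + T_z) ⊕ (2n+1)T_w (in disjoint variables) represents every nonnegative integer except n. -/

import Mathlib

/-! Put `m = (n + 1) q + r` with `0 ≤ r ≤ n`. If `r < n`, take `w = 0`, let `f` represent `r`
and write `q` as a sum of three triangular numbers; if `r = n` and `q ≥ 1`, then
`m = (2 n + 1) + (n + 1) (q - 1)`, so take `T w = 1`, let `f` represent `0` and write `q - 1` as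
a sum of three triangular numbers. Conversely, `m = n` leaves no room for a positive term besides
`f`, so `f` would have to represent `n`.

The substance is Gauss's theorem `gauss_triangular` that each natural number `q` is a sum of three
triangular numbers, i.e. that `N = 8 q + 3` is a sum of three squares (which are then odd).
Dirichlet's theorem on primes in arithmetic progressions gives a prime `p ≡ 1 mod 4` with
`2 p = d N - 1` and `d ≡ 1 mod 8`, and Jacobi reciprocity makes `-d` a square modulo `p`, hence
modulo `2 p` (`exists_dvd_sq_add`). From this one writes down a positive definite integral ternary
form of determinant `1` that represents `N`. Such a form takes only sums of three squares as
values (`ternary_sum_three_squares`), by reduction theory: Hermite's bound for binary forms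
(`binary_reduce`) lets one lower the leading coefficient until it is `1`, and then a square splits
off and leaves a binary form of determinant `1`. -/

def T (x : ℤ) : ℤ := x * (x + 1) / 2

theorem two_mul_T (x : ℤ) : 2 * T x = x * (x + 1) :=
  Int.mul_ediv_cancel' (Int.even_mul_succ_self x).two_dvd

theorem T_nonneg (x : ℤ) : 0 ≤ T x := by
  have h := two_mul_T x
  rcases le_or_gt 0 x with hx | hx <;> nlinarith

/-- Some residue of `B` modulo `A` has absolute value at most `A / 2`. -/
theorem exists_shift (A B : ℤ) (hA : 0 < A) : ∃ k : ℤ, 4 * (B + k * A) ^ 2 ≤ A ^ 2 := by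
  refine ⟨-((2 * B + A) / (2 * A)), ?_⟩
  have h1 := Int.emod_add_mul_ediv (2 * B + A) (2 * A)
  have h2 := Int.emod_nonneg (2 * B + A) (show 2 * A ≠ 0 by omega)
  have h3 := Int.emod_lt_of_pos (2 * B + A) (show 0 < 2 * A by omega)
  set q := (2 * B + A) / (2 * A)
  have h : (2 * (B + -q * A)) ^ 2 ≤ A ^ 2 := sq_le_sq' (by linarith) (by linarith)
  linarith

/-- Hermite's bound, with the short vector `(p, r)` completed to a basis: a positive definite
binary form `A y² + 2 B y z + C z²` of determinant `D` takes a value at most `√(4 D / 3)` at a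
primitive vector. -/
theorem binary_reduce (N : ℕ) : ∀ A B C D : ℤ, A.toNat ≤ N → 0 < A → A * C - B ^ 2 = D → 0 < D →
    ∃ p q r s : ℤ, p * s - q * r = 1 ∧ 0 < A * p ^ 2 + 2 * B * p * r + C * r ^ 2 ∧
      3 * (A * p ^ 2 + 2 * B * p * r + C * r ^ 2) ^ 2 ≤ 4 * D := by
  induction N with
  | zero => intro A B C D h1 h2; omega
  | succ N ih =>
    intro A B C D hN hA hD hD0
    obtain ⟨k, hk⟩ : ∃ k : ℤ, 4 * (B + k * A) ^ 2 ≤ A ^ 2 := exists_shift A B hA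
    set B' := B + k * A with hB'
    set C' := C + 2 * k * B + k ^ 2 * A with hC'
    have hD' : A * C' - B' ^ 2 = D := by rw [← hD, hB', hC']; ring
    have hC0 : 0 < C' := by
      by_contra h
      nlinarith [mul_nonneg hA.le (sub_nonneg.2 (not_lt.1 h)), sq_nonneg B']
    by_cases hlt : C' < A
    · obtain ⟨p, q, r, s, h1, h2, h3⟩ := ih C' (-B') A D (by omega) hC0 (by linarith) hD0
      -- undo the rotation `(y, z) ↦ (-z, y)` and the shift `y ↦ y + k z`
      have e : A * (k * p - r) ^ 2 + 2 * B * (k * p - r) * p + C * p ^ 2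
          = C' * p ^ 2 + 2 * (-B') * p * r + A * r ^ 2 := by rw [hB', hC']; ring
      refine ⟨k * p - r, k * q - s, p, q, by linarith, ?_, ?_⟩
      · rw [e]; exact h2
      · rw [e]; exact h3
    · refine ⟨1, 0, 0, 1, by ring, by simpa using hA, ?_⟩
      have : A * A ≤ A * C' := mul_le_mul_of_nonneg_left (not_lt.1 hlt) hA.le
      have e : A * 1 ^ 2 + 2 * B * 1 * 0 + C * 0 ^ 2 = A := by ring
      rw [e]
      nlinarith

theorem binary_sum_two_squares (A B C : ℤ) (hA : 0 < A) (hD : A * C - B ^ 2 = 1) (y z : ℤ) :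
    ∃ u v : ℤ, A * y ^ 2 + 2 * B * y * z + C * z ^ 2 = u ^ 2 + v ^ 2 := by
  obtain ⟨p, q, r, s, -, h2, h3⟩ := binary_reduce _ A B C 1 le_rfl hA hD one_pos
  have h1 : A * p ^ 2 + 2 * B * p * r + C * r ^ 2 = 1 := by nlinarith
  -- Cauchy's identity `Q(v) Q(w) = B(v, w) ^ 2 + det(v, w) ^ 2` with `Q(v) = 1`
  refine ⟨A * p * y + B * (p * z + r * y) + C * r * z, p * z - r * y, ?_⟩
  linear_combination (-(A * y ^ 2 + 2 * B * y * z + C * z ^ 2)) * h1 + (p * z - r * y) ^ 2 * hD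

/-- The numerical reason for termination of the ternary reduction: if `a ≤ b`, then
`a b - f² ≥ 3 a² / 4`, which together with Hermite's bound `hg` gives `27 a³ ≤ 64`. -/
theorem lt_of_reduced (a b f : ℤ) (ha : 2 ≤ a) (hf : 4 * f ^ 2 ≤ a ^ 2)
    (hg : 3 * (a * b - f ^ 2) ^ 2 ≤ 4 * a) : b < a := by
  by_contra h
  have h2 : a * a ≤ a * b := mul_le_mul_of_nonneg_left (not_lt.1 h) (by omega)
  have h3 : 3 * a ^ 2 ≤ 4 * (a * b - f ^ 2) := by linarith
  have h4 : (3 * a ^ 2) ^ 2 ≤ (4 * (a * b - f ^ 2)) ^ 2 := pow_le_pow_left₀ (by positivity) h3 2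
  have h5 : 27 * a ^ 4 ≤ 64 * a := by linarith
  have h6 : 2 ^ 3 ≤ a ^ 3 := pow_le_pow_left₀ (by norm_num) ha 3
  have h7 : a * 2 ^ 3 ≤ a * a ^ 3 := mul_le_mul_of_nonneg_left h6 (by omega)
  linarith

/-- All values of a positive definite integral ternary form of determinant `1` are sums of three
squares. The induction is on a bound for the leading coefficient `a`. -/
theorem ternary_sum_three_squares (N : ℕ) : ∀ a b c d e f : ℤ, a.toNat ≤ N → 0 < a →
    0 < a * b - f ^ 2 → a * b * c + 2 * d * e * f - a * d ^ 2 - b * e ^ 2 - c * f ^ 2 = 1 →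
    ∀ x y z : ℤ, ∃ u v w : ℤ,
      a * x ^ 2 + b * y ^ 2 + c * z ^ 2 + 2 * d * y * z + 2 * e * x * z + 2 * f * x * y
        = u ^ 2 + v ^ 2 + w ^ 2 := by
  induction N with
  | zero => intro a b c d e f h1 h2; omega
  | succ N ih =>
    intro a b c d e f hN ha hg hdet x y z
    rcases (show 1 ≤ a from ha).eq_or_lt with h1 | h1
    · subst h1
      obtain ⟨v, w, h⟩ := binary_sum_two_squares (b - f ^ 2) (d - e * f) (c - e ^ 2)
        (by linarith) (by linarith) y z
      exact ⟨x + f * y + e * z, v, w, by linear_combination h⟩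
    · -- `a F = (a x + f y + e z) ^ 2 + G(y, z)`, where the binary form `G` has determinant `a`
      obtain ⟨p, q, r, s, hu, hG, hG'⟩ := binary_reduce _ (a * b - f ^ 2) (a * d - e * f)
        (a * c - e ^ 2) a le_rfl hg (by linear_combination a * hdet) ha
      obtain ⟨k, hk⟩ := exists_shift a (f * p + e * r) ha
      -- coefficients after the substitution `(x, y, z) ↦ (x + k y, p y + q z, r y + s z)`
      set f' := f * p + e * r + k * a with hf'
      set e' := f * q + e * s with he'
      set d' := b * p * q + d * (p * s + q * r) + c * r * s + k * e' with hd'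
      set c' := b * q ^ 2 + 2 * d * q * s + c * s ^ 2 with hc'
      set b' := b * p ^ 2 + 2 * d * p * r + c * r ^ 2 + 2 * k * (f * p + e * r) + k ^ 2 * a with hb'
      have hg' : a * b' - f' ^ 2 = (a * b - f ^ 2) * p ^ 2 + 2 * (a * d - e * f) * p * r
          + (a * c - e ^ 2) * r ^ 2 := by rw [hb', hf']; ring
      rw [← hg'] at hG hG'
      have hdet' : a * b' * c' + 2 * d' * e' * f' - a * d' ^ 2 - b' * e' ^ 2 - c' * f' ^ 2 = 1 := by
        have : a * b' * c' + 2 * d' * e' * f' - a * d' ^ 2 - b' * e' ^ 2 - c' * f' ^ 2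
          = (a * b * c + 2 * d * e * f - a * d ^ 2 - b * e ^ 2 - c * f ^ 2)
            * (p * s - q * r) ^ 2 := by rw [hb', hc', hd', hf', he']; ring
        rw [this, hdet, hu]; norm_num
      have hb0 : 0 < b' := by
        by_contra h
        nlinarith [mul_nonneg ha.le (sub_nonneg.2 (not_lt.1 h)), sq_nonneg f']
      have hlt : b' < a := lt_of_reduced a b' f' h1 hk hG'
      -- the old coordinates in terms of the new ones
      set y' := s * y - q * z with hy'
      set z' := p * z - r * y with hz'
      obtain ⟨u, v, w, h⟩ := ih b' a c' e' d' f' (by omega) hb0 (by linarith)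
        (by linarith) y' (x - k * y') z'
      refine ⟨u, v, w, h ▸ ?_⟩
      have ey : y = p * y' + q * z' := by rw [hy', hz']; linear_combination (-y) * hu
      have ez : z = r * y' + s * z' := by rw [hy', hz']; linear_combination (-z) * hu
      clear_value y' z'
      subst ey ez
      rw [hb', hc', hd', hf', he']
      ring

/-- The arithmetic input: for `N = 8 m + 3` there are `d > 0` and `x` such that `-d ≡ x²` modulo
`d N - 1`. -/
theorem exists_dvd_sq_add (m : ℕ) : ∃ d x : ℤ, 0 < d ∧
    (d * (8 * m + 3) - 1) ∣ (x ^ 2 + d) := by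
  have hco : Nat.Coprime (4 * m + 1) (32 * m + 12) := by
    have h4 : Nat.Coprime (4 * m + 1) 4 := by simp
    have e : 32 * m + 12 = 4 + 8 * (4 * m + 1) := by ring
    rw [e, Nat.coprime_add_mul_right_right]
    exact h4
  obtain ⟨p, hgt, hp, hmod⟩ := Nat.forall_exists_prime_gt_and_modEq (4 * m + 1) (by omega) hco
  have : Fact p.Prime := ⟨hp⟩
  obtain ⟨j, hj⟩ : 32 * m + 12 ∣ p - (4 * m + 1) := (Nat.modEq_iff_dvd' hgt.le).1 hmod.symm
  have hpj : p = 4 * m + 1 + (32 * m + 12) * j := by omega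
  have h2p : 2 * (p : ℤ) = (8 * j + 1) * (8 * m + 3) - 1 := by rw [hpj]; push_cast; ring
  have hp4 : p % 4 = 1 := by
    have : p = 4 * (m + (8 * m + 3) * j) + 1 := by rw [hpj]; ring
    omega
  have hpo : Odd p := Nat.odd_iff.2 (by omega)
  have hdo : Odd (8 * j + 1) := Nat.odd_iff.2 (by omega)
  have hd2 : jacobiSym 2 (8 * j + 1) = 1 := by
    rw [jacobiSym.at_two hdo, ZMod.χ₈_nat_mod_eight, show (8 * j + 1) % 8 = 1 by omega]
    rfl
  have hdp : jacobiSym p (8 * j + 1) = 1 := by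
    -- `2 p ≡ -1` modulo `8 j + 1`, and both `2` and `-1` have symbol `1`
    have h : jacobiSym (2 * p) (8 * j + 1) = jacobiSym (-1) (8 * j + 1) := by
      apply jacobiSym.mod_left'
      refine Int.ModEq.symm (Int.modEq_iff_dvd.2 ⟨8 * m + 3, ?_⟩)
      rw [h2p]
      push_cast
      ring
    rw [jacobiSym.mul_left, hd2, one_mul, jacobiSym.at_neg_one hdo,
      ZMod.χ₄_nat_one_mod_four (by omega)] at h
    exact h
  have hJ : jacobiSym (-((8 * j + 1 : ℕ) : ℤ)) p = 1 := by
    rw [← neg_one_mul, jacobiSym.mul_left, jacobiSym.at_neg_one hpo,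
      ZMod.χ₄_nat_one_mod_four hp4, one_mul,
      jacobiSym.quadratic_reciprocity_one_mod_four' hdo hp4, hdp]
  obtain ⟨t, ht⟩ := ZMod.isSquare_of_jacobiSym_eq_one hJ
  obtain ⟨x, rfl⟩ := ZMod.intCast_surjective t
  have hx : (p : ℤ) ∣ x ^ 2 + (8 * j + 1) := by
    rw [← ZMod.intCast_zmod_eq_zero_iff_dvd]
    push_cast at ht ⊢
    linear_combination -ht
  -- adding `p` to `x` if necessary, the square root `x` may be taken odd
  obtain ⟨x, hxo, hx⟩ : ∃ x : ℤ, Odd x ∧ (p : ℤ) ∣ x ^ 2 + (8 * j + 1) := by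
    rcases Int.even_or_odd x with h | h
    · refine ⟨x + p, h.add_odd (by exact_mod_cast hpo), ?_⟩
      have e : (x + p) ^ 2 + (8 * j + 1) = x ^ 2 + (8 * j + 1) + p * (2 * x + p) := by ring
      rw [e]
      exact dvd_add hx (dvd_mul_right _ _)
    · exact ⟨x, h, hx⟩
  refine ⟨8 * j + 1, x, by positivity, ?_⟩
  rw [← h2p]
  refine IsCoprime.mul_dvd ?_ ?_ hx
  · obtain ⟨i, hi⟩ := hpo
    exact ⟨-i, 1, by rw [hi]; push_cast; ring⟩
  · obtain ⟨i, rfl⟩ := hxo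
    exact ⟨2 * i ^ 2 + 2 * i + 4 * j + 1, by ring⟩

theorem gauss_triangular (m : ℕ) : ∃ a b c : ℤ, T a + T b + T c = m := by
  obtain ⟨d, x, hd, h, hh⟩ := exists_dvd_sq_add m
  have hpos : 0 < d * (8 * m + 3) - 1 := by nlinarith
  have h0 : 0 < h := by
    by_contra hn
    nlinarith [mul_nonneg hpos.le (sub_nonneg.2 (not_lt.1 hn)), sq_nonneg x]
  -- the form with matrix `(h, x, 1; x, d N - 1, 0; 1, 0, N)`, `N = 8 m + 3`, evaluated at `(0, 0, 1)`
  obtain ⟨u, v, w, e⟩ := ternary_sum_three_squares _ h (d * (8 * m + 3) - 1) (8 * m + 3) 0 1 x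
    le_rfl h0 (by linarith) (by linear_combination (-(8 * m + 3) : ℤ) * hh) 0 0 1
  have e : u ^ 2 + v ^ 2 + w ^ 2 = 8 * m + 3 := by linarith
  have sq8 : ∀ t : ℤ, (t ^ 2 % 8 = 0 ∨ t ^ 2 % 8 = 4) ∨ (Odd t ∧ t ^ 2 % 8 = 1) := by
    intro t
    rw [Int.odd_iff]
    have h : t % 8 = 0 ∨ t % 8 = 1 ∨ t % 8 = 2 ∨ t % 8 = 3 ∨ t % 8 = 4 ∨ t % 8 = 5 ∨ t % 8 = 6 ∨
      t % 8 = 7 := by omega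
    rcases h with h | h | h | h | h | h | h | h <;> simp [sq, Int.mul_emod, h] <;> omega
  have hodd : Odd u ∧ Odd v ∧ Odd w := by
    rcases sq8 u with hu | ⟨hu, hu'⟩ <;> rcases sq8 v with hv | ⟨hv, hv'⟩ <;>
      rcases sq8 w with hw | ⟨hw, hw'⟩ <;> first | exact ⟨hu, hv, hw⟩ | (exfalso; omega)
  obtain ⟨⟨a, rfl⟩, ⟨b, rfl⟩, ⟨c, rfl⟩⟩ := hodd
  refine ⟨a, b, c, ?_⟩
  have := two_mul_T a
  have := two_mul_T b
  have := two_mul_T c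
  linarith

theorem padding_construction (n : ℕ) (hn : 0 < n) (k : ℕ)
    (f : (Fin k → ℤ) → ℤ)
    (hnonneg : ∀ x, 0 ≤ f x)
    (hbelow : ∀ m : ℕ, m < n → ∃ x, f x = (m : ℤ))
    (hnot : ¬ ∃ x, f x = (n : ℤ)) :
    ∀ m : ℕ,
      ((∃ (x : Fin k → ℤ) (a b c w : ℤ),
        f x + ((n : ℤ) + 1) * (T a + T b + T c) + (2 * (n : ℤ) + 1) * T w = (m : ℤ))
      ↔ m ≠ n) := by
  intro m
  constructor
  · rintro ⟨x, a, b, c, w, h⟩ rfl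
    have hS : 0 ≤ T a + T b + T c := by linarith [T_nonneg a, T_nonneg b, T_nonneg c]
    have hw := T_nonneg w
    have hf := hnonneg x
    have hm : (0 : ℤ) < m := by exact_mod_cast hn
    have hS0 : T a + T b + T c = 0 := by
      by_contra h0
      have : 1 ≤ T a + T b + T c := by omega
      nlinarith
    have hw0 : T w = 0 := by
      by_contra h0
      have : 1 ≤ T w := by omega
      nlinarith
    rw [hS0, hw0] at h
    exact hnot ⟨x, by linarith⟩
  · intro hmn
    have hdiv := Nat.mod_add_div m (n + 1)
    have hlt := Nat.mod_lt m (Nat.succ_pos n)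
    set q := m / (n + 1)
    set r := m % (n + 1)
    rcases (Nat.lt_succ_iff.1 hlt).lt_or_eq with hr | hr
    · obtain ⟨x, hx⟩ := hbelow r hr
      obtain ⟨a, b, c, h⟩ := gauss_triangular q
      refine ⟨x, a, b, c, 0, ?_⟩
      rw [hx, h, show T 0 = 0 from rfl, ← hdiv]
      push_cast
      ring
    · obtain ⟨q', hq⟩ : ∃ q', q = q' + 1 := by
        refine Nat.exists_eq_succ_of_ne_zero fun h0 => hmn ?_
        rw [← hdiv, h0, hr]; simp
      obtain ⟨x, hx⟩ := hbelow 0 hn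
      obtain ⟨a, b, c, h⟩ := gauss_triangular q'
      refine ⟨x, a, b, c, 1, ?_⟩
      rw [hx, h, show T 1 = 1 from rfl, ← hdiv, hr, hq]
      push_cast
      ring
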